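/- For every forward XPath qualifier u over element types Σ and attribute names Σ', there exists an ATRA₁ 𝒜_u with alphabet Σ ∪ Σ' that is finitely equivalent to u: for every finite XML tree τ over Σ and Σ' and every Σ-labelled node n of τ, we have τ, n ⊨ u if and only if 𝒜_u accepts (i.e., has a final run on) the subtree of τ rooted at n. Moreover, if u is safety (i.e., every occurrence of ▽, ▽* and ▷* in u lies under an odd number of negations), then 𝒜_u can be chosen to be in addition safety equivalent to u: for every finite or infinite XML tree τ and Σ-labelled node n, τ, n ⊨ u if and only if 𝒜_u safety-accepts the subtree of τ rooted at n. -/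

import Mathlib

/-! ## Trees and data trees -/

abbrev Node : Type := List Bool

/-- A (possibly infinite) data tree over alphabet `A`, with data from `ℕ`.
It is represented by the partial labelling functions on nonleaf nodes:
`label n = some a` iff `n` is a nonleaf node labelled `a`, and similarly
`dlabel` gives the datum at each nonleaf node. -/
structure DataTree (A : Type) where
  label : Node → Option A
  dlabel : Node → Option ℕ
  root_nonleaf : (label []).isSome
  domain_eq : ∀ n : Node, (dlabel n).isSome ↔ (label n).isSome
  tree_cond : ∀ (n : Node) (d : Bool), (label (n ++ [d])).isSome → (label n).isSome

namespace DataTree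
variable {A : Type}

def Nonleaf (τ : DataTree A) (n : Node) : Prop := (τ.label n).isSome

/-- The set of nodes: the root together with both children of every nonleaf node. -/
def Nodes (τ : DataTree A) : Set Node :=
  {n | n = [] ∨ ∃ m d, n = m ++ [d] ∧ τ.Nonleaf m}

def Leaf (τ : DataTree A) (n : Node) : Prop := n ∈ τ.Nodes ∧ ¬ τ.Nonleaf n

def Finite (τ : DataTree A) : Prop := {n | τ.Nonleaf n}.Finite

end DataTree

/-- A (possibly infinite) tree over alphabet `A` (a data tree without data). -/
structure BTree (A : Type) where
  label : Node → Option A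
  root_nonleaf : (label []).isSome
  tree_cond : ∀ (n : Node) (d : Bool), (label (n ++ [d])).isSome → (label n).isSome

namespace BTree
variable {A : Type}
def Nonleaf (t : BTree A) (n : Node) : Prop := (t.label n).isSome
def Nodes (t : BTree A) : Set Node :=
  {n | n = [] ∨ ∃ m d, n = m ++ [d] ∧ t.Nonleaf m}
def Leaf (t : BTree A) (n : Node) : Prop := n ∈ t.Nodes ∧ ¬ t.Nonleaf n
def Finite (t : BTree A) : Prop := {n | t.Nonleaf n}.Finite
end BTree

/-- The underlying tree of a data tree (erasing the data). -/
def DataTree.toTree {A : Type} (τ : DataTree A) : BTree A :=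
  ⟨τ.label, τ.root_nonleaf, τ.tree_cond⟩

/-- `τ` and `τ'` have equal `l`-prefixes: they agree on all nodes of length `< l`
(hence their restrictions to nodes of length `≤ l` coincide). -/
def EqPrefix {A : Type} (τ τ' : DataTree A) (l : ℕ) : Prop :=
  ∀ n : Node, n.length < l → τ.label n = τ'.label n ∧ τ.dlabel n = τ'.dlabel n

open Classical in
/-- The distance between data trees: `0` if they are equal, and otherwise `1/l`
where `l` is least such that the `l`-prefixes are distinct. -/
noncomputable def treeDist {A : Type} (τ τ' : DataTree A) : ℝ :=
  if τ = τ' then 0 else ((sInf {l : ℕ | ¬ EqPrefix τ τ' l} : ℕ) : ℝ)⁻¹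

/-! ## Forward alternating tree 1-register automata (ATRA₁) -/

/-- Positive Boolean formulae over `Q`: atoms `q(d, ↓)` / `q(d, ¬↓)` are
`atom q d true` / `atom q d false`, where `d : Bool` is the direction. -/
inductive PosBool (Q : Type) : Type
  | atom : Q → Bool → Bool → PosBool Q
  | tt : PosBool Q
  | ff : PosBool Q
  | and : PosBool Q → PosBool Q → PosBool Q
  | or : PosBool Q → PosBool Q → PosBool Q

/-- Satisfaction of a positive Boolean formula by a quadruple
`R d u` of subsets of `Q` (`d` = direction, `u = true` means register update `↓`). -/
def PosBool.Sat {Q : Type} (R : Bool → Bool → Set Q) : PosBool Q → Prop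
  | .atom q d u => q ∈ R d u
  | .tt => True
  | .ff => False
  | .and φ ψ => φ.Sat R ∧ ψ.Sat R
  | .or φ ψ => φ.Sat R ∨ ψ.Sat R

/-- The dual of a positive Boolean formula: swaps `⊤`/`⊥` and `∧`/`∨`. -/
def PosBool.dual {Q : Type} : PosBool Q → PosBool Q
  | .atom q d u => .atom q d u
  | .tt => .ff
  | .ff => .tt
  | .and φ ψ => .or φ.dual ψ.dual
  | .or φ ψ => .and φ.dual ψ.dual

def PosBool.map {Q Q' : Type} (f : Q → Q') : PosBool Q → PosBool Q'
  | .atom q d u => .atom (f q) d u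
  | .tt => .tt
  | .ff => .ff
  | .and φ ψ => .and (φ.map f) (ψ.map f)
  | .or φ ψ => .or (φ.map f) (ψ.map f)

/-- A forward alternating tree 1-register automaton. -/
structure ATRA (A : Type) where
  Q : Type
  fin : Finite Q
  qI : Q
  F : Set Q
  δ : Q → A → Bool → PosBool Q

namespace ATRA
variable {A : Type}

/-- The transition relation between configurations (finite sets of threads),
relative to a letter `a` and a datum `E`. -/
def Trans (M : ATRA A) (a : A) (E : ℕ) (G H0 H1 : Set (M.Q × ℕ)) : Prop :=
  ∀ q D, (q, D) ∈ G →
    ∃ R : Bool → Bool → Set M.Q,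
      (M.δ q a (decide (D = E))).Sat R ∧
      ∀ d : Bool,
        (∀ r ∈ R d true, (r, E) ∈ (if d then H1 else H0)) ∧
        (∀ r ∈ R d false, (r, D) ∈ (if d then H1 else H0))

/-- A run of `M` on a data tree `τ`. -/
structure Run (M : ATRA A) (τ : DataTree A) where
  G : Node → Set (M.Q × ℕ)
  finite : ∀ n : Node, (G n).Finite
  support : ∀ n : Node, n ∉ τ.Nodes → G n = ∅
  init : ∃ D : ℕ, τ.dlabel [] = some D ∧ (M.qI, D) ∈ G []
  step : ∀ (n : Node) (a : A) (D : ℕ), τ.label n = some a → τ.dlabel n = some D →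
    M.Trans a D (G n) (G (n ++ [false])) (G (n ++ [true]))

def Run.Final {M : ATRA A} {τ : DataTree A} (ρ : M.Run τ) : Prop :=
  ∀ n, τ.Leaf n → ∀ q D, (q, D) ∈ ρ.G n → q ∈ M.F

def Run.FiniteRun {M : ATRA A} {τ : DataTree A} (ρ : M.Run τ) : Prop :=
  ∃ l : ℕ, ∀ n : Node, l ≤ n.length → ρ.G n = ∅

/-- The language of `M` over finite data trees. -/
def Lfin (M : ATRA A) : Set (DataTree A) :=
  {τ | τ.Finite ∧ ∃ ρ : M.Run τ, ρ.Final}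

/-- The safety language of `M`: data trees on which `M` has a final run. -/
def Lsaf (M : ATRA A) : Set (DataTree A) :=
  {τ | ∃ ρ : M.Run τ, ρ.Final}

/-- The co-safety language of `M`: data trees on which `M` has a final finite run. -/
def Lcos (M : ATRA A) : Set (DataTree A) :=
  {τ | ∃ ρ : M.Run τ, ρ.Final ∧ ρ.FiniteRun}

/-- The dual automaton: final states complemented, transition formulae dualised. -/
def dual (M : ATRA A) : ATRA A :=
  ⟨M.Q, M.fin, M.qI, M.Fᶜ, fun q a b => (M.δ q a b).dual⟩

end ATRA

/-! ## XML trees -/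

section XML
variable {E Att : Type}

def IsAttrNode (τ : DataTree (E ⊕ Att)) (n : Node) : Prop :=
  ∃ a, τ.label n = some (Sum.inr a)

def IsElemNode (τ : DataTree (E ⊕ Att)) (n : Node) : Prop :=
  ∃ e, τ.label n = some (Sum.inl e)

/-- The nodes `n ++ [false]^i` for `1 ≤ i ≤ j` form a chain of attribute nodes. -/
def AttrChain (τ : DataTree (E ⊕ Att)) (n : Node) (j : ℕ) : Prop :=
  1 ≤ j ∧ ∀ i, 1 ≤ i → i ≤ j → IsAttrNode τ (n ++ List.replicate i false)

/-- A data tree over `E ⊕ Att` represents an XML document: each document node is a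
sequence of data-tree nodes (a type node followed by its attribute nodes, chained
by left children, with non-last nodes having a leaf as right child and the
attribute names in a sequence being distinct). -/
structure IsXMLTree (τ : DataTree (E ⊕ Att)) : Prop where
  root_elem : IsElemNode τ []
  attr_left : ∀ n : Node, ¬ IsAttrNode τ (n ++ [true])
  seq_right_leaf : ∀ n : Node, IsAttrNode τ (n ++ [false]) → ¬ τ.Nonleaf (n ++ [true])
  attr_distinct : ∀ n j1 j2, IsElemNode τ n → AttrChain τ n j1 → AttrChain τ n j2 →
    j1 ≠ j2 →
    τ.label (n ++ List.replicate j1 false) ≠ τ.label (n ++ List.replicate j2 false)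

/-- `m` is the last node of the sequence representing the document node `n`. -/
def SeqLast (τ : DataTree (E ⊕ Att)) (n m : Node) : Prop :=
  IsElemNode τ n ∧
  ((m = n ∧ ¬ IsAttrNode τ (n ++ [false])) ∨
   (∃ j, AttrChain τ n j ∧ m = n ++ List.replicate j false ∧
      ¬ IsAttrNode τ (m ++ [false])))

/-- `n'` represents the first child of the document node represented by `n`. -/
def FirstChild (τ : DataTree (E ⊕ Att)) (n n' : Node) : Prop :=
  ∃ m, SeqLast τ n m ∧ n' = m ++ [false] ∧ IsElemNode τ n'

/-- The next-sibling relation `▷` of the represented document. -/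
def NextSib (τ : DataTree (E ⊕ Att)) (n n' : Node) : Prop :=
  ∃ m, SeqLast τ n m ∧ n' = m ++ [true] ∧ IsElemNode τ n'

/-- The child relation `▽` of the represented document. -/
def DocChild (τ : DataTree (E ⊕ Att)) (n n' : Node) : Prop :=
  ∃ n0, FirstChild τ n n0 ∧ Relation.ReflTransGen (NextSib τ) n0 n'

/-- The document node `n` has attribute `a` with value `D`. -/
def AttrVal (τ : DataTree (E ⊕ Att)) (n : Node) (a : Att) (D : ℕ) : Prop :=
  ∃ j, AttrChain τ n j ∧ τ.label (n ++ List.replicate j false) = some (Sum.inr a) ∧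
    τ.dlabel (n ++ List.replicate j false) = some D

end XML

/-- The subtree of a data tree rooted at a nonleaf node `n`. -/
def DataTree.subtree {A : Type} (τ : DataTree A) (n : Node)
    (h : (τ.label n).isSome) : DataTree A where
  label m := τ.label (n ++ m)
  dlabel m := τ.dlabel (n ++ m)
  root_nonleaf := by simpa using h
  domain_eq m := τ.domain_eq (n ++ m)
  tree_cond m d hm := τ.tree_cond (n ++ m) d (by rw [List.append_assoc]; exact hm)

theorem IsElemNode.isSome {E Att : Type} {τ : DataTree (E ⊕ Att)} {n : Node}
    (h : IsElemNode τ n) : (τ.label n).isSome := by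
  obtain ⟨e, he⟩ := h; simp [he]

/-! ## Forward XPath -/

mutual
/-- Forward XPath queries. -/
inductive XQuery (E Att : Type) : Type
  | eps : XQuery E Att                                -- ε
  | child : XQuery E Att                              -- ▽
  | nsib : XQuery E Att                               -- ▷
  | childStar : XQuery E Att                          -- ▽*
  | nsibStar : XQuery E Att                           -- ▷*
  | comp : XQuery E Att → XQuery E Att → XQuery E Att -- p / p
  | union : XQuery E Att → XQuery E Att → XQuery E Att
  | filter : XQuery E Att → XQual E Att → XQuery E Att -- p[u]

/-- In data comparisons `ε/@a'₁ ⋈ p₂/@a'₂`, the query `p₂` is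
`ε`, `▽/p'₂` or `▷/p'₂`. -/
inductive XStart (E Att : Type) : Type
  | eps : XStart E Att
  | down : XQuery E Att → XStart E Att
  | right : XQuery E Att → XStart E Att

/-- Forward XPath qualifiers. -/
inductive XQual (E Att : Type) : Type
  | not : XQual E Att → XQual E Att
  | and : XQual E Att → XQual E Att → XQual E Att
  | intro : XQuery E Att → XQual E Att                -- p?
  | lab : E → XQual E Att                             -- a
  | eqq : Att → XStart E Att → Att → XQual E Att      -- ε/@a'₁ = p₂/@a'₂
  | neq : Att → XStart E Att → Att → XQual E Att      -- ε/@a'₁ ≠ p₂/@a'₂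
end

mutual
/-- Semantics of queries: `QSem τ p n n'` is `τ, n, n' ⊨ p`. -/
def QSem {E Att : Type} (τ : DataTree (E ⊕ Att)) : XQuery E Att → Node → Node → Prop
  | .eps, n, n' => n = n'
  | .child, n, n' => DocChild τ n n'
  | .nsib, n, n' => NextSib τ n n'
  | .childStar, n, n' => Relation.ReflTransGen (DocChild τ) n n'
  | .nsibStar, n, n' => Relation.ReflTransGen (NextSib τ) n n'
  | .comp p q, n, n' => ∃ m, QSem τ p n m ∧ QSem τ q m n'
  | .union p q, n, n' => QSem τ p n n' ∨ QSem τ q n n'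
  | .filter p u, n, n' => QSem τ p n n' ∧ USem τ u n'

def SSem {E Att : Type} (τ : DataTree (E ⊕ Att)) : XStart E Att → Node → Node → Prop
  | .eps, n, n' => n = n'
  | .down p, n, n' => ∃ m, DocChild τ n m ∧ QSem τ p m n'
  | .right p, n, n' => ∃ m, NextSib τ n m ∧ QSem τ p m n'

/-- Semantics of qualifiers: `USem τ u n` is `τ, n ⊨ u`. -/
def USem {E Att : Type} (τ : DataTree (E ⊕ Att)) : XQual E Att → Node → Prop
  | .not u, n => ¬ USem τ u n
  | .and u v, n => USem τ u n ∧ USem τ v n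
  | .intro p, n => ∃ n', QSem τ p n n'
  | .lab e, n => τ.label n = some (Sum.inl e)
  | .eqq a1 p2 a2, n => ∃ D1 D2 n2, AttrVal τ n a1 D1 ∧ SSem τ p2 n n2 ∧
      AttrVal τ n2 a2 D2 ∧ D1 = D2
  | .neq a1 p2 a2, n => ∃ D1 D2 n2, AttrVal τ n a1 D1 ∧ SSem τ p2 n n2 ∧
      AttrVal τ n2 a2 D2 ∧ D1 ≠ D2
end

mutual
/-- `QSafe b p`: every occurrence of `▽`, `▽*`, `▷*` in `p` is under an odd number
of negations, where `b = true` records that `p` itself is under an even number. -/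
def QSafe {E Att : Type} : Bool → XQuery E Att → Prop
  | _, .eps => True
  | b, .child => b = false
  | _, .nsib => True
  | b, .childStar => b = false
  | b, .nsibStar => b = false
  | b, .comp p q => QSafe b p ∧ QSafe b q
  | b, .union p q => QSafe b p ∧ QSafe b q
  | b, .filter p u => QSafe b p ∧ USafe b u

def SSafe {E Att : Type} : Bool → XStart E Att → Prop
  | _, .eps => True
  | b, .down p => b = false ∧ QSafe b p
  | b, .right p => QSafe b p

def USafe {E Att : Type} : Bool → XQual E Att → Prop
  | b, .not u => USafe (!b) u
  | b, .and u v => USafe b u ∧ USafe b v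
  | b, .intro p => QSafe b p
  | _, .lab _ => True
  | b, .eqq _ p2 _ => SSafe b p2
  | b, .neq _ p2 _ => SSafe b p2
end

/-!
A qualifier is translated, in continuation-passing style, into a formula of a logic with one
register over the nodes of the data tree. Its only unbounded modality `eventually` asserts
reachability along guarded steps to children. The threads of the automaton claim that a subformula
is true (polarity `true`) or false (polarity `false`) at a node for a content of the register, and
`eventually` is unfolded one step at a time.

The true claims form a final run. Conversely, the claims of a final run are true unless a positive
`eventually` is deferred forever, as a thread is final only if its polarity is `false`. No infinite
deferral is possible along well-founded steps. On a finite tree all steps are well-founded. The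
translation of a safety qualifier has a positive `eventually` only along attribute sequences, and
these are finite since the attribute names in them are distinct.
-/

/-! ## Automata and their thread relations -/

namespace PosBool
variable {Q : Type}

open Classical in
/-- The constant `⊤` or `⊥` with the truth value of `p`. -/
noncomputable def ofProp (p : Prop) : PosBool Q := if p then .tt else .ff

/-- Conjunction or disjunction, selected by a polarity. -/
def junction : Bool → PosBool Q → PosBool Q → PosBool Q
  | true => .and
  | false => .or

open Classical in
/-- Restriction to a set of states: an atom outside `C` becomes `⊥`. -/
noncomputable def restrict (C : Set Q) : PosBool Q → PosBool C
  | .atom q d u => if h : q ∈ C then .atom ⟨q, h⟩ d u else .ff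
  | .tt => .tt
  | .ff => .ff
  | .and f g => .and (f.restrict C) (g.restrict C)
  | .or f g => .or (f.restrict C) (g.restrict C)

theorem sat_ofProp {R : Bool → Bool → Set Q} {p : Prop} : (ofProp p).Sat R ↔ p := by
  by_cases hp : p <;> simp [ofProp, hp, Sat]

theorem sat_restrict {C : Set Q} {R : Bool → Bool → Set C} {f : PosBool Q} :
    (f.restrict C).Sat R ↔ f.Sat fun d u => Subtype.val '' R d u := by
  induction f with
  | atom q d u => by_cases hq : q ∈ C <;> simp [restrict, Sat, hq]
  | tt => rfl
  | ff => rfl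
  | and f g ihf ihg => exact and_congr ihf ihg
  | or f g ihf ihg => exact or_congr ihf ihg

theorem Sat.mono {R R' : Bool → Bool → Set Q} (h : ∀ d u, R d u ⊆ R' d u) {f : PosBool Q}
    (hf : f.Sat R) : f.Sat R' := by
  induction f with
  | atom q d u => exact h d u hf
  | tt => trivial
  | ff => exact hf
  | and f g ihf ihg => exact hf.imp ihf ihg
  | or f g ihf ihg => exact hf.imp ihf ihg

section Junction
variable {R : Bool → Bool → Set Q} {f g : PosBool Q} {p q : Prop} {pol : Bool}

theorem sat_junction_of_iff_and (h : pol = true ↔ p ∧ q) (hf : (pol = true ↔ p) → f.Sat R)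
    (hg : (pol = true ↔ q) → g.Sat R) : (junction pol f g).Sat R := by
  cases pol with
  | true => exact ⟨hf (by tauto), hg (by tauto)⟩
  | false =>
    by_cases hp : p
    · exact .inr (hg (by tauto))
    · exact .inl (hf (by tauto))

theorem iff_and_of_sat_junction (h : (junction pol f g).Sat R) (hf : f.Sat R → (pol = true ↔ p))
    (hg : g.Sat R → (pol = true ↔ q)) : pol = true ↔ p ∧ q := by
  cases pol with
  | true => exact iff_of_true rfl ⟨(hf h.1).1 rfl, (hg h.2).1 rfl⟩
  | false => exact h.elim (fun h => by have := hf h; tauto) fun h => by have := hg h; tauto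

theorem sat_junction_not_of_iff_or (h : pol = true ↔ p ∨ q) (hf : (pol = true ↔ p) → f.Sat R)
    (hg : (pol = true ↔ q) → g.Sat R) : (junction (!pol) f g).Sat R := by
  have hnot : (!pol) = true ↔ ¬pol = true := by rw [Bool.not_eq_true', Bool.not_eq_true]
  refine sat_junction_of_iff_and (p := ¬p) (q := ¬q) ?_ (fun h => hf ?_) fun h => hg ?_
  · rw [hnot, h, not_or]
  · rwa [hnot, not_iff_not] at h
  · rwa [hnot, not_iff_not] at h

end Junction

end PosBool

namespace DataTree
variable {A : Type}

/-- A step to a child whose letter is allowed by the guard `S` for the direction taken. -/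
def Step (τ : DataTree A) (S : Bool → Set A) (x y : Node) : Prop :=
  ∃ d, y = x ++ [d] ∧ ∃ c ∈ S d, τ.label y = some c

/-- The data occurring on the path from the root to a node, that is, the possible register
contents at that node. -/
def dataAbove (τ : DataTree A) (x : Node) : Set ℕ :=
  {D | ∃ y, y <+: x ∧ τ.dlabel y = some D}

theorem Nonleaf.exists_label_dlabel {τ : DataTree A} {x : Node} (hx : τ.Nonleaf x) :
    ∃ c E, τ.label x = some c ∧ τ.dlabel x = some E := by
  obtain ⟨c, hc⟩ := Option.isSome_iff_exists.1 hx
  obtain ⟨E, hE⟩ := Option.isSome_iff_exists.1 ((τ.domain_eq x).2 hx)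
  exact ⟨c, E, hc, hE⟩

theorem nonleaf_of_label {τ : DataTree A} {x : Node} {c : A} (hc : τ.label x = some c) :
    τ.Nonleaf x := by
  simp only [Nonleaf, hc, Option.isSome_some]

theorem Step.nonleaf {τ : DataTree A} {S : Bool → Set A} {x y : Node} (h : τ.Step S x y) :
    τ.Nonleaf y :=
  have ⟨_, _, _, _, hc⟩ := h
  nonleaf_of_label hc

theorem Step.length_eq {τ : DataTree A} {S : Bool → Set A} {x y : Node} (h : τ.Step S x y) :
    y.length = x.length + 1 := by
  obtain ⟨d, rfl, -⟩ := h
  exact List.length_append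

theorem Finite.wellFounded_step {τ : DataTree A} (hτ : τ.Finite) (S : Bool → Set A) :
    WellFounded (flip (τ.Step S)) := by
  obtain ⟨B, hB⟩ := (hτ.image List.length).bddAbove
  refine Subrelation.wf (fun {y x} h => ?_) (measure fun x : Node => B + 1 - x.length).wf
  have hy : y.length ≤ B := hB ⟨y, Step.nonleaf h, rfl⟩
  have hxy : y.length = x.length + 1 := Step.length_eq h
  change B + 1 - y.length < B + 1 - x.length
  omega

theorem finite_dataAbove (τ : DataTree A) (x : Node) : (τ.dataAbove x).Finite := by
  refine (x.inits.finite_toSet.image fun y => (τ.dlabel y).getD 0).subset ?_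
  rintro D ⟨y, hyx, hD⟩
  exact ⟨y, (List.mem_inits y x).2 hyx, by simp only [hD, Option.getD_some]⟩

theorem dataAbove_append_subset (τ : DataTree A) (x y : Node) :
    τ.dataAbove x ⊆ τ.dataAbove (x ++ y) :=
  fun _ ⟨z, hzx, hD⟩ => ⟨z, hzx.trans (List.prefix_append x y), hD⟩

section Subtree
variable {τ : DataTree A} {n : Node} {hn : (τ.label n).isSome}

theorem step_subtree_iff {S : Bool → Set A} {x y : Node} :
    (τ.subtree n hn).Step S x y ↔ τ.Step S (n ++ x) (n ++ y) := by
  simp only [Step, subtree, List.append_assoc, List.append_cancel_left_eq]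

theorem reflTransGen_step_append_iff {S : Bool → Set A} {x z : Node} :
    Relation.ReflTransGen (τ.Step S) (n ++ x) z ↔
      ∃ y, z = n ++ y ∧ Relation.ReflTransGen ((τ.subtree n hn).Step S) x y := by
  constructor
  · intro h
    induction h with
    | refl => exact ⟨x, rfl, .refl⟩
    | tail _ hstep ih =>
      obtain ⟨y, rfl, hxy⟩ := ih
      obtain ⟨d, rfl, hd⟩ := hstep
      rw [List.append_assoc] at hd ⊢
      exact ⟨y ++ [d], rfl, hxy.tail ⟨d, rfl, hd⟩⟩
  · rintro ⟨y, rfl, hxy⟩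
    exact hxy.lift (n ++ ·) fun _ _ => step_subtree_iff.1

theorem wellFounded_step_subtree {S : Bool → Set A} (h : WellFounded (flip (τ.Step S))) :
    WellFounded (flip ((τ.subtree n hn).Step S)) :=
  Subrelation.wf (fun h => step_subtree_iff.1 h) (InvImage.wf (n ++ ·) h)

theorem Finite.subtree (hτ : τ.Finite) : (τ.subtree n hn).Finite :=
  Set.Finite.preimage (List.append_right_injective n).injOn hτ

end Subtree

end DataTree

section Runs
variable {A Q : Type}

/-- The quadruple of sets of states that the threads related by `V` occupy at the children of a
node with datum `E`, as seen by a thread whose register contains `D`. -/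
def childStates (V : Q → Node → ℕ → Prop) (x : Node) (D E : ℕ) (d u : Bool) : Set Q :=
  {r | V r (x ++ [d]) (if u then E else D)}

theorem mem_childStates_decide {V : Q → Node → ℕ → Prop} {x : Node} {v D E : ℕ} {d : Bool} {q : Q}
    (hv : v = D ∨ v = E) : q ∈ childStates V x D E d (decide (v = E)) ↔ V q (x ++ [d]) v := by
  by_cases hvE : v = E
  · simp [childStates, hvE]
  · simp [childStates, hv.resolve_right hvE, hv.resolve_right hvE ▸ hvE]

/-- `V q x D` says that a thread in state `q` with register content `D` is present at node `x`.
These are the final runs of an automaton, but without the finiteness conditions on its set of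
states and on its configurations. -/
structure IsFinalThreadRel (δ : Q → A → Bool → PosBool Q) (F : Set Q) (τ : DataTree A)
    (V : Q → Node → ℕ → Prop) : Prop where
  step : ∀ {q x D a E}, τ.label x = some a → τ.dlabel x = some E → V q x D →
    (δ q a (decide (D = E))).Sat (childStates V x D E)
  final : ∀ {q x D}, V q x D → ¬ τ.Nonleaf x → q ∈ F

namespace ATRA

theorem Run.Final.isFinalThreadRel {M : ATRA A} {τ : DataTree A} {ρ : M.Run τ} (hρ : ρ.Final) :
    IsFinalThreadRel M.δ M.F τ fun q x D => (q, D) ∈ ρ.G x where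
  step {q x D a E} ha hE hq := by
    obtain ⟨R, hR, hsub⟩ := ρ.step x a E ha hE q D hq
    refine hR.mono fun d u r hr => ?_
    have h := hsub d
    cases d <;> cases u
    exacts [h.2 r hr, h.1 r hr, h.2 r hr, h.1 r hr]
  final {q x D} hq hx := by
    by_cases hmem : x ∈ τ.Nodes
    · exact hρ x ⟨hmem, hx⟩ q D hq
    · simp only [ρ.support x hmem, Set.mem_empty_iff_false] at hq

/-- The run whose threads are those of `V` with register contents from the path to the root; the
latter restriction makes its configurations finite. -/
def runOfThreadRel {M : ATRA A} {τ : DataTree A} {V : M.Q → Node → ℕ → Prop}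
    (hV : IsFinalThreadRel M.δ M.F τ V) {D : ℕ} (hD : τ.dlabel [] = some D) (hqI : V M.qI [] D) :
    M.Run τ where
  G x := {t | x ∈ τ.Nodes ∧ t.2 ∈ τ.dataAbove x ∧ V t.1 x t.2}
  finite x := by
    have := M.fin
    exact (Set.finite_univ.prod (τ.finite_dataAbove x)).subset fun t ht => ⟨trivial, ht.2.1⟩
  support x hx := Set.eq_empty_of_forall_notMem fun t ht => hx ht.1
  init := ⟨D, hD, Or.inl rfl, ⟨[], List.prefix_rfl, hD⟩, hqI⟩
  step x a E ha hE q D := by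
    rintro ⟨-, hDx, hq⟩
    have hnode (d : Bool) : x ++ [d] ∈ τ.Nodes := Or.inr ⟨x, d, rfl, DataTree.nonleaf_of_label ha⟩
    have hEd (d : Bool) : E ∈ τ.dataAbove (x ++ [d]) := ⟨x, List.prefix_append _ _, hE⟩
    have hDd (d : Bool) : D ∈ τ.dataAbove (x ++ [d]) := τ.dataAbove_append_subset x [d] hDx
    refine ⟨childStates V x D E, hV.step ha hE hq, fun d => ⟨fun r hr => ?_, fun r hr => ?_⟩⟩
    · cases d <;> exact ⟨hnode _, hEd _, hr⟩
    · cases d <;> exact ⟨hnode _, hDd _, hr⟩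

theorem mem_Lsaf_iff {M : ATRA A} {τ : DataTree A} :
    τ ∈ M.Lsaf ↔ ∃ V, IsFinalThreadRel M.δ M.F τ V ∧ ∃ D, τ.dlabel [] = some D ∧ V M.qI [] D := by
  constructor
  · rintro ⟨ρ, hρ⟩
    exact ⟨_, hρ.isFinalThreadRel, ρ.init⟩
  · rintro ⟨V, hV, D, hD, hqI⟩
    exact ⟨runOfThreadRel hV hD hqI, fun _ hx _ _ hq => hV.final hq.2.2 hx.2⟩

/-- The automaton with states restricted to a finite set `C`. -/
noncomputable def ofFinite (δ : Q → A → Bool → PosBool Q) (F : Set Q) {C : Set Q} (hC : C.Finite)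
    (q₀ : C) : ATRA A where
  Q := C
  fin := hC.to_subtype
  qI := q₀
  F := Subtype.val ⁻¹' F
  δ q a t := (δ q a t).restrict C

theorem mem_Lsaf_ofFinite_iff {δ : Q → A → Bool → PosBool Q} {F C : Set Q} {hC : C.Finite}
    {q₀ : C} {τ : DataTree A} :
    τ ∈ (ofFinite δ F hC q₀).Lsaf ↔
      ∃ V, IsFinalThreadRel δ F τ V ∧ (∀ q x D, V q x D → q ∈ C) ∧
        ∃ D, τ.dlabel [] = some D ∧ V q₀ [] D := by
  rw [mem_Lsaf_iff]
  constructor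
  · rintro ⟨V, hV, D, hD, hq₀⟩
    refine ⟨fun q x D => ∃ h : q ∈ C, V ⟨q, h⟩ x D, ⟨?_, ?_⟩, fun q x D h => h.1,
      D, hD, q₀.2, hq₀⟩
    · rintro q x D a E ha hE ⟨hq, hqV⟩
      refine (PosBool.sat_restrict.1 (hV.step ha hE hqV)).mono ?_
      rintro d u _ ⟨r, hr, rfl⟩
      exact ⟨r.2, hr⟩
    · rintro q x D ⟨hq, hqV⟩ hx
      exact hV.final hqV hx
  · rintro ⟨V, hV, hVC, D, hD, hq₀⟩
    refine ⟨fun q : C => V q, ⟨fun ha hE hq => ?_, fun hq hx => hV.final hq hx⟩, D, hD, hq₀⟩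
    refine PosBool.sat_restrict.2 ((hV.step ha hE hq).mono fun d u r hr => ?_)
    exact ⟨⟨r, hVC _ _ _ hr⟩, hr, rfl⟩

end ATRA

end Runs

/-! ## The freeze logic -/

/-- Formulae of a logic with one register, about a node of a data tree and the content of the
register: `letter P` says that the label of the node is in `P`, `next d φ` moves to the child in
direction `d`, `freeze φ` stores the datum of the node in the register, `regEq` compares the two,
and `eventually S φ` is the reachability modality along steps guarded by `S`. -/
inductive FreezeFormula (A : Type) : Type
  | letter (P : Set A)
  | regEq
  | neg (φ : FreezeFormula A)
  | and (φ ψ : FreezeFormula A)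
  | next (d : Bool) (φ : FreezeFormula A)
  | freeze (φ : FreezeFormula A)
  | eventually (S : Bool → Set A) (φ : FreezeFormula A)

namespace FreezeFormula
variable {A : Type}

/-- Satisfaction at the node `x` when the register contains `v`. -/
def Holds (τ : DataTree A) : FreezeFormula A → Node → ℕ → Prop
  | letter P, x, _ => ∃ c ∈ P, τ.label x = some c
  | regEq, x, v => τ.dlabel x = some v
  | neg φ, x, v => ¬ φ.Holds τ x v
  | and φ ψ, x, v => φ.Holds τ x v ∧ ψ.Holds τ x v
  | next d φ, x, v => τ.Nonleaf (x ++ [d]) ∧ φ.Holds τ (x ++ [d]) v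
  | freeze φ, x, _ => ∃ E, τ.dlabel x = some E ∧ φ.Holds τ x E
  | eventually S φ, x, v => ∃ y, Relation.ReflTransGen (τ.Step S) x y ∧ φ.Holds τ y v

/-- Disjunction. -/
def or (φ ψ : FreezeFormula A) : FreezeFormula A := neg (and (neg φ) (neg ψ))

/-- The formula that continues `eventually S φ` at a child in direction `d`. -/
def guarded (S : Bool → Set A) (φ : FreezeFormula A) (d : Bool) : FreezeFormula A :=
  and (letter (S d)) (eventually S φ)

/-- Every `eventually` of polarity `true` in the formula, which itself has polarity `pol`, runs
along a relation without infinite chains. -/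
def WellFoundedOn (τ : DataTree A) : Bool → FreezeFormula A → Prop
  | _, letter _ => True
  | _, regEq => True
  | pol, neg φ => φ.WellFoundedOn τ (!pol)
  | pol, and φ ψ => φ.WellFoundedOn τ pol ∧ ψ.WellFoundedOn τ pol
  | pol, next _ φ => φ.WellFoundedOn τ pol
  | pol, freeze φ => φ.WellFoundedOn τ pol
  | pol, eventually S φ =>
    (pol = true → WellFounded (flip (τ.Step S))) ∧ φ.WellFoundedOn τ pol

section Semantics
variable {τ : DataTree A}

theorem holds_or_iff {φ ψ : FreezeFormula A} {x : Node} {v : ℕ} :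
    (φ.or ψ).Holds τ x v ↔ φ.Holds τ x v ∨ ψ.Holds τ x v := by
  simp only [or, Holds, not_and_or, not_not]

theorem holds_eventually_iff {S : Bool → Set A} {φ : FreezeFormula A} {x : Node} {v : ℕ} :
    (eventually S φ).Holds τ x v ↔
      φ.Holds τ x v ∨ ∃ d, τ.Nonleaf (x ++ [d]) ∧ (guarded S φ d).Holds τ (x ++ [d]) v := by
  constructor
  · rintro ⟨y, hxy, hφ⟩
    obtain rfl | ⟨_, ⟨d, rfl, hd⟩, hdy⟩ := hxy.cases_head
    · exact .inl hφ
    · have ⟨_, _, hc⟩ := hd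
      exact .inr ⟨d, DataTree.nonleaf_of_label hc, hd, y, hdy, hφ⟩
  · rintro (hφ | ⟨d, -, hd, y, hdy, hφ⟩)
    · exact ⟨x, .refl, hφ⟩
    · exact ⟨y, .head ⟨d, rfl, hd⟩ hdy, hφ⟩

theorem wellFoundedOn_or_iff {pol : Bool} {φ ψ : FreezeFormula A} :
    (φ.or ψ).WellFoundedOn τ pol ↔ φ.WellFoundedOn τ pol ∧ ψ.WellFoundedOn τ pol := by
  simp only [or, WellFoundedOn, Bool.not_not]

theorem wellFoundedOn_of_wellFounded_step (h : ∀ S, WellFounded (flip (τ.Step S)))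
    (φ : FreezeFormula A) (pol : Bool) : φ.WellFoundedOn τ pol := by
  induction φ generalizing pol with
  | letter | regEq => trivial
  | neg _ ih | next _ _ ih | freeze _ ih => exact ih _
  | and _ _ ihφ ihψ => exact ⟨ihφ _, ihψ _⟩
  | eventually S φ ih => exact ⟨fun _ => h S, ih _⟩

variable {n : Node} {hn : (τ.label n).isSome}

theorem WellFoundedOn.subtree {φ : FreezeFormula A} {pol : Bool} (h : φ.WellFoundedOn τ pol) :
    φ.WellFoundedOn (τ.subtree n hn) pol := by
  induction φ generalizing pol with
  | letter | regEq => trivial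
  | neg _ ih | next _ _ ih | freeze _ ih => exact ih h
  | and φ ψ ihφ ihψ => exact ⟨ihφ h.1, ihψ h.2⟩
  | eventually S φ ih =>
    exact ⟨fun hpol => DataTree.wellFounded_step_subtree (h.1 hpol), ih h.2⟩

theorem holds_subtree_iff {φ : FreezeFormula A} {x : Node} {v : ℕ} :
    φ.Holds (τ.subtree n hn) x v ↔ φ.Holds τ (n ++ x) v := by
  induction φ generalizing x v with
  | letter | regEq => rfl
  | neg φ ih => exact not_congr ih
  | and φ ψ ihφ ihψ => exact and_congr ihφ ihψ
  | next d φ ih =>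
    simp only [Holds, ih, List.append_assoc]
    rfl
  | freeze φ ih => exact exists_congr fun _ => and_congr Iff.rfl ih
  | eventually S φ ih =>
    constructor
    · rintro ⟨y, hxy, hφ⟩
      exact ⟨n ++ y, DataTree.reflTransGen_step_append_iff.2 ⟨y, rfl, hxy⟩, ih.1 hφ⟩
    · rintro ⟨_, hxy, hφ⟩
      obtain ⟨y, rfl, hxy'⟩ := (DataTree.reflTransGen_step_append_iff (hn := hn)).1 hxy
      exact ⟨y, hxy', ih.2 hφ⟩

end Semantics

/-- The transition formula that unfolds a formula of polarity `pol` at a node labelled `c`, where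
`t` says whether the register content equals the datum of the node. It can serve as the update flag
of the atoms as well: after `freeze` the two agree, and updating a register that already contains
the datum changes nothing. -/
noncomputable def expand (c : A) : Bool → Bool → FreezeFormula A → PosBool (FreezeFormula A × Bool)
  | _, pol, letter P => .ofProp (pol = true ↔ c ∈ P)
  | t, pol, regEq => .ofProp (pol = t)
  | t, pol, neg φ => φ.expand c t (!pol)
  | t, pol, and φ ψ => .junction pol (φ.expand c t pol) (ψ.expand c t pol)
  | t, pol, next d φ => .atom (φ, pol) d t
  | _, pol, freeze φ => φ.expand c true pol
  | t, pol, eventually S φ => .junction (!pol) (φ.expand c t pol) <|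
      .junction (!pol) (.atom (guarded S φ false, pol) false t)
        (.atom (guarded S φ true, pol) true t)

/-- The formulae from which the atoms of `expand` are built. -/
def targets : FreezeFormula A → Set (FreezeFormula A)
  | letter _ => ∅
  | regEq => ∅
  | neg φ => φ.targets
  | and φ ψ => φ.targets ∪ ψ.targets
  | next _ φ => insert φ φ.targets
  | freeze φ => φ.targets
  | eventually S φ => Set.range (guarded S φ) ∪ φ.targets

theorem finite_targets (φ : FreezeFormula A) : φ.targets.Finite := by
  induction φ with
  | letter | regEq => exact Set.finite_empty
  | neg _ ih | freeze _ ih => exact ih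
  | and φ ψ ihφ ihψ => exact ihφ.union ihψ
  | next _ φ ih => exact ih.insert φ
  | eventually S φ ih => exact (Set.finite_range _).union ih

theorem targets_subset_of_mem {φ ψ : FreezeFormula A} (h : ψ ∈ φ.targets) :
    ψ.targets ⊆ φ.targets := by
  induction φ with
  | letter | regEq => exact h.elim
  | neg _ ih | freeze _ ih => exact ih h
  | and φ₁ φ₂ ih₁ ih₂ =>
    exact h.elim (fun h => Set.subset_union_of_subset_left (ih₁ h) _)
      fun h => Set.subset_union_of_subset_right (ih₂ h) _
  | next d φ ih =>
    obtain rfl | h := h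
    · exact Set.subset_insert _ _
    · exact (ih h).trans (Set.subset_insert _ _)
  | eventually S φ ih =>
    obtain ⟨d, rfl⟩ | h := h
    · exact Set.union_subset (Set.empty_subset _) subset_rfl
    · exact (ih h).trans Set.subset_union_right

/-- The claim of a thread in state `q`: the formula of `q` holds (polarity `true`) or fails
(polarity `false`) at the node `x` with register content `v`. Since a forward automaton spawns
threads at leaves too, all formulae count as false there. -/
def Claim (τ : DataTree A) (q : FreezeFormula A × Bool) (x : Node) (v : ℕ) : Prop :=
  q.2 = true ↔ τ.Nonleaf x ∧ q.1.Holds τ x v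

theorem sat_expand_letter_iff {τ : DataTree A} {x : Node} {c : A} (hc : τ.label x = some c)
    {R : Bool → Bool → Set (FreezeFormula A × Bool)} {P : Set A} {t pol : Bool} {v : ℕ} :
    ((letter P).expand c t pol).Sat R ↔ (pol = true ↔ (letter P).Holds τ x v) := by
  simp only [expand, PosBool.sat_ofProp, Holds, hc, Option.some.injEq, exists_eq_right']

theorem sat_expand_regEq_iff {τ : DataTree A} {x : Node} {c : A} {E : ℕ}
    (hE : τ.dlabel x = some E) {R : Bool → Bool → Set (FreezeFormula A × Bool)} {pol : Bool}
    {v : ℕ} : (regEq.expand c (decide (v = E)) pol).Sat R ↔ (pol = true ↔ regEq.Holds τ x v) := by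
  rw [expand, PosBool.sat_ofProp, Holds, hE, Option.some.injEq, eq_comm (a := E)]
  cases pol <;> simp

section Completeness
variable {τ : DataTree A} {x : Node} {c : A} {D E : ℕ}

theorem sat_expand_of_holds (hc : τ.label x = some c) (hE : τ.dlabel x = some E)
    {C : Set (FreezeFormula A)} {φ : FreezeFormula A} (hC : φ.targets ⊆ C) {pol : Bool} {v : ℕ}
    (hv : v = D ∨ v = E) (h : pol = true ↔ φ.Holds τ x v) :
    (φ.expand c (decide (v = E)) pol).Sat
      (childStates (fun q y w => q.1 ∈ C ∧ Claim τ q y w) x D E) := by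
  induction φ generalizing v pol with
  | letter P => exact (sat_expand_letter_iff hc).2 h
  | regEq => exact (sat_expand_regEq_iff hE).2 h
  | neg φ ih =>
    refine ih hC hv ?_
    cases pol <;> simpa [Holds] using h
  | and φ ψ ihφ ihψ =>
    obtain ⟨hφ, hψ⟩ := Set.union_subset_iff.1 hC
    exact PosBool.sat_junction_of_iff_and h (ihφ hφ hv) (ihψ hψ hv)
  | next d φ => exact (mem_childStates_decide hv).2 ⟨hC (Set.mem_insert φ _), h⟩
  | freeze φ ih =>
    have h' := ih hC (.inr rfl) (h.trans (by simp [Holds, hE]))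
    rwa [decide_eq_true rfl] at h'
  | eventually S φ ih =>
    obtain ⟨hguarded, hφ⟩ := Set.union_subset_iff.1 hC
    have hatom (d : Bool)
        (hd : pol = true ↔ τ.Nonleaf (x ++ [d]) ∧ (guarded S φ d).Holds τ (x ++ [d]) v) :
        (PosBool.atom (guarded S φ d, pol) d (decide (v = E))).Sat
          (childStates (fun q y w => q.1 ∈ C ∧ Claim τ q y w) x D E) :=
      (mem_childStates_decide hv).2 ⟨hguarded ⟨d, rfl⟩, hd⟩
    rw [holds_eventually_iff, Bool.exists_bool] at h
    exact PosBool.sat_junction_not_of_iff_or h (ih hφ hv) fun h =>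
      PosBool.sat_junction_not_of_iff_or h (hatom false) (hatom true)

theorem isFinalThreadRel_claim {C : Set (FreezeFormula A)} (hC : ∀ φ ∈ C, φ.targets ⊆ C) :
    IsFinalThreadRel (fun q a t => q.1.expand a t q.2) {q | q.2 = false} τ
      fun q x v => q.1 ∈ C ∧ Claim τ q x v where
  step ha hE := fun ⟨hq, hclaim⟩ =>
    sat_expand_of_holds ha hE (hC _ hq) (.inl rfl)
      (hclaim.trans (and_iff_right (DataTree.nonleaf_of_label ha)))
  final := fun ⟨_, hclaim⟩ hx => Bool.eq_false_iff.2 fun hpol => hx (hclaim.1 hpol).1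

end Completeness

section Soundness
variable {τ : DataTree A} {V : FreezeFormula A × Bool → Node → ℕ → Prop}

/-- The threads of `V` can only satisfy the expansion of `φ` with polarity `pol` at nodes where `φ`
has the truth value `pol`. -/
def ExpansionSound (τ : DataTree A) (V : FreezeFormula A × Bool → Node → ℕ → Prop)
    (φ : FreezeFormula A) (pol : Bool) : Prop :=
  ∀ ⦃x c E D v⦄, τ.label x = some c → τ.dlabel x = some E → (v = D ∨ v = E) →
    (φ.expand c (decide (v = E)) pol).Sat (childStates V x D E) → (pol = true ↔ φ.Holds τ x v)

theorem sat_expand_guarded {R : Bool → Bool → Set (FreezeFormula A × Bool)} {S : Bool → Set A}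
    {φ : FreezeFormula A} {c : A} {d t pol : Bool}
    (h : ((guarded S φ d).expand c t pol).Sat R) :
    (pol = true → c ∈ S d) ∧ (c ∈ S d → ((eventually S φ).expand c t pol).Sat R) := by
  cases pol with
  | true => exact ⟨fun _ => (PosBool.sat_ofProp.1 h.1).1 rfl, fun _ => h.2⟩
  | false =>
    refine ⟨nofun, fun hc => h.resolve_left fun hletter => ?_⟩
    exact Bool.false_ne_true ((PosBool.sat_ofProp.1 hletter).2 hc)

variable (hV : IsFinalThreadRel (fun q a t => q.1.expand a t q.2) {q | q.2 = false} τ V)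
include hV

theorem claim_of_expansionSound {q : FreezeFormula A × Bool} (hq : ExpansionSound τ V q.1 q.2)
    {x : Node} {v : ℕ} (h : V q x v) : Claim τ q x v := by
  by_cases hx : τ.Nonleaf x
  · obtain ⟨c, E, hc, hE⟩ := hx.exists_label_dlabel
    exact (hq hc hE (.inl rfl) (hV.step hc hE h)).trans (and_iff_right hx).symm
  · have hpol : q.2 = false := hV.final h hx
    simp only [Claim, hpol, hx, Bool.false_eq_true, false_and]

theorem expansionSound_eventually_true {S : Bool → Set A} {φ : FreezeFormula A}
    (hS : WellFounded (flip (τ.Step S))) (hφ : ExpansionSound τ V φ true) :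
    ExpansionSound τ V (eventually S φ) true := by
  intro x
  induction x using hS.induction with
  | _ x ih =>
    intro c E D v hc hE hv hsat
    have hatom (d : Bool) (h : V (guarded S φ d, true) (x ++ [d]) v) :
        (guarded S φ d).Holds τ (x ++ [d]) v := by
      have hx : τ.Nonleaf (x ++ [d]) := by
        by_contra hx
        exact Bool.noConfusion (hV.final h hx : true = false)
      obtain ⟨c', E', hc', hE'⟩ := hx.exists_label_dlabel
      obtain ⟨hguard, hev⟩ := sat_expand_guarded (hV.step hc' hE' h)
      refine ⟨⟨c', hguard rfl, hc'⟩, ?_⟩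
      exact (ih _ ⟨d, rfl, c', hguard rfl, hc'⟩ hc' hE' (.inl rfl) (hev (hguard rfl))).1 rfl
    have hnext (d : Bool) (h : V (guarded S φ d, true) (x ++ [d]) v) :
        (eventually S φ).Holds τ x v :=
      have ⟨⟨a, haS, ha⟩, hev⟩ := hatom d h
      holds_eventually_iff.2 (.inr ⟨d, DataTree.nonleaf_of_label ha, ⟨a, haS, ha⟩, hev⟩)
    refine iff_of_true rfl ?_
    obtain hsat | hsat | hsat := hsat
    · exact holds_eventually_iff.2 (.inl ((hφ hc hE hv hsat).1 rfl))
    · exact hnext false ((mem_childStates_decide hv).1 hsat)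
    · exact hnext true ((mem_childStates_decide hv).1 hsat)

theorem expansionSound_eventually_false {S : Bool → Set A} {φ : FreezeFormula A}
    (hφ : ExpansionSound τ V φ false) : ExpansionSound τ V (eventually S φ) false := by
  intro x c E D v hc hE hv hsat
  refine iff_of_false Bool.false_ne_true ?_
  rintro ⟨y, hxy, hy⟩
  induction hxy using Relation.ReflTransGen.head_induction_on generalizing c E D with
  | refl => exact Bool.false_ne_true ((hφ hc hE hv hsat.1).2 hy)
  | @head x _ hstep _ ih =>
    obtain ⟨d, rfl, c', hc'S, hc'⟩ := hstep
    obtain ⟨_, E', -, hE'⟩ := (DataTree.nonleaf_of_label hc').exists_label_dlabel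
    have hthread : V (guarded S φ d, false) (x ++ [d]) v := by
      cases d
      exacts [(mem_childStates_decide hv).1 hsat.2.1, (mem_childStates_decide hv).1 hsat.2.2]
    exact ih hc' hE' (.inl rfl) ((sat_expand_guarded (hV.step hc' hE' hthread)).2 hc'S)

theorem expansionSound (φ : FreezeFormula A) {pol : Bool} (h : φ.WellFoundedOn τ pol) :
    ExpansionSound τ V φ pol := by
  induction φ generalizing pol with
  | letter P => exact fun _ _ _ _ _ hc _ _ => (sat_expand_letter_iff hc).1
  | regEq => exact fun _ _ _ _ _ _ hE _ => (sat_expand_regEq_iff hE).1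
  | neg φ ih =>
    intro x c E D v hc hE hv hsat
    have hφ := ih h hc hE hv hsat
    cases pol <;> simpa [Holds] using hφ
  | and φ ψ ihφ ihψ =>
    intro x c E D v hc hE hv hsat
    exact PosBool.iff_and_of_sat_junction hsat (ihφ h.1 hc hE hv) (ihψ h.2 hc hE hv)
  | next d φ ih =>
    intro x c E D v _ _ hv hsat
    exact claim_of_expansionSound hV (q := (φ, pol)) (ih h) ((mem_childStates_decide hv).1 hsat)
  | freeze φ ih =>
    intro x c E D v hc hE _ hsat
    have hφ := ih h hc hE (.inr rfl) (by rwa [decide_eq_true rfl])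
    simpa [Holds, hE] using hφ
  | eventually S φ ih =>
    cases pol with
    | true => exact expansionSound_eventually_true hV (h.1 rfl) (ih h.2)
    | false => exact expansionSound_eventually_false hV (ih h.2)

end Soundness

/-- The automaton whose threads claim the truth or falsity of `φ` and of the formulae that arise
from it by unfolding. -/
noncomputable def automaton (φ : FreezeFormula A) : ATRA A :=
  ATRA.ofFinite (fun q a t => q.1.expand a t q.2) {q | q.2 = false}
    (C := insert φ φ.targets ×ˢ Set.univ) ((φ.finite_targets.insert φ).prod Set.finite_univ)
    ⟨(φ, true), Set.mem_insert φ _, trivial⟩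

theorem mem_Lsaf_automaton_iff {τ : DataTree A} {φ : FreezeFormula A}
    (h : φ.WellFoundedOn τ true) :
    τ ∈ φ.automaton.Lsaf ↔ ∃ D, τ.dlabel [] = some D ∧ φ.Holds τ [] D := by
  refine ATRA.mem_Lsaf_ofFinite_iff.trans ⟨?_, ?_⟩
  · rintro ⟨V, hV, -, D, hD, hq₀⟩
    exact ⟨D, hD, ((claim_of_expansionSound hV (expansionSound hV φ h) hq₀).1 rfl).2⟩
  · rintro ⟨D, hD, hφ⟩
    have hC : ∀ ψ ∈ insert φ φ.targets, ψ.targets ⊆ insert φ φ.targets := by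
      rintro ψ (rfl | hψ)
      · exact Set.subset_insert ψ _
      · exact (targets_subset_of_mem hψ).trans (Set.subset_insert φ _)
    exact ⟨_, isFinalThreadRel_claim hC, fun q _ _ hq => ⟨hq.1, trivial⟩, D, hD,
      Set.mem_insert φ _, iff_of_true rfl ⟨τ.root_nonleaf, hφ⟩⟩

end FreezeFormula

/-! ## Attribute sequences and document order -/

section Documents
variable {E Att : Type} {τ : DataTree (E ⊕ Att)}

open Relation (ReflTransGen)

/-- The guard that lets a path continue along the attribute sequence of a document node, and enter
another document node in the directions `B` only: none for `∅`, and those along `▷` for `{true}`. -/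
def walk (B : Set Bool) (d : Bool) : Set (E ⊕ Att) :=
  {c | c.elim (fun _ => d ∈ B) fun _ => d = false}

/-- `y` is the attribute node directly after `x` in the sequence representing a document node. -/
abbrev AttrStep (τ : DataTree (E ⊕ Att)) : Node → Node → Prop := τ.Step (walk ∅)

/-- The first-child relation for `d = false`, and the next-sibling relation for `d = true`. -/
def DocNext (τ : DataTree (E ⊕ Att)) (d : Bool) (n y : Node) : Prop :=
  ∃ m, SeqLast τ n m ∧ y = m ++ [d] ∧ IsElemNode τ y

theorem IsElemNode.not_isAttrNode {n : Node} (h : IsElemNode τ n) : ¬ IsAttrNode τ n :=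
  fun ⟨_, ha⟩ => have ⟨_, he⟩ := h; Sum.inl_ne_inr (Option.some_injective _ (he.symm.trans ha))

theorem step_walk_iff {B : Set Bool} {x y : Node} :
    τ.Step (walk B) x y ↔
      (y = x ++ [false] ∧ IsAttrNode τ y) ∨ ∃ d ∈ B, y = x ++ [d] ∧ IsElemNode τ y := by
  constructor
  · rintro ⟨d, rfl, c | c, hd, hc⟩
    · exact .inr ⟨d, hd, rfl, c, hc⟩
    · obtain rfl : d = false := hd
      exact .inl ⟨rfl, c, hc⟩
  · rintro (⟨rfl, a, ha⟩ | ⟨d, hd, rfl, e, he⟩)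
    · exact ⟨false, rfl, .inr a, rfl, ha⟩
    · exact ⟨d, rfl, .inl e, hd, he⟩

theorem attrStep_iff {x y : Node} : AttrStep τ x y ↔ y = x ++ [false] ∧ IsAttrNode τ y := by
  simp only [AttrStep, step_walk_iff, Set.mem_empty_iff_false, false_and, exists_false, or_false]

theorem AttrStep.step_walk {B : Set Bool} {x y : Node} (h : AttrStep τ x y) :
    τ.Step (walk B) x y :=
  step_walk_iff.2 (.inl (attrStep_iff.1 h))

theorem reflTransGen_attrStep_iff {n m : Node} :
    ReflTransGen (AttrStep τ) n m ↔
      ∃ j, (∀ i, 1 ≤ i → i ≤ j → IsAttrNode τ (n ++ List.replicate i false)) ∧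
        m = n ++ List.replicate j false := by
  constructor
  · intro h
    induction h with
    | refl => exact ⟨0, by omega, (List.append_nil n).symm⟩
    | tail _ hstep ih =>
      obtain ⟨j, hj, rfl⟩ := ih
      obtain ⟨rfl, hattr⟩ := attrStep_iff.1 hstep
      rw [List.append_assoc, ← List.replicate_succ'] at hattr ⊢
      refine ⟨j + 1, fun i hi hij => ?_, rfl⟩
      obtain rfl | hij := hij.eq_or_lt
      · exact hattr
      · exact hj i hi (by omega)
  · rintro ⟨j, hj, rfl⟩
    induction j with
    | zero => rw [List.replicate_zero, List.append_nil]
    | succ j ih =>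
      have hattr := hj (j + 1) (by omega) le_rfl
      rw [List.replicate_succ', ← List.append_assoc] at hattr ⊢
      exact (ih fun i hi hij => hj i hi (by omega)).tail (attrStep_iff.2 ⟨rfl, hattr⟩)

theorem seqLast_iff {n m : Node} :
    SeqLast τ n m ↔
      IsElemNode τ n ∧ ReflTransGen (AttrStep τ) n m ∧ ¬ IsAttrNode τ (m ++ [false]) := by
  rw [SeqLast, reflTransGen_attrStep_iff]
  refine and_congr_right fun _ => ⟨?_, ?_⟩
  · rintro (⟨rfl, hm⟩ | ⟨j, hj, hm, hattr⟩)
    · exact ⟨⟨0, by omega, (List.append_nil m).symm⟩, hm⟩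
    · exact ⟨⟨j, hj.2, hm⟩, hattr⟩
  · rintro ⟨⟨_ | j, hj, rfl⟩, hattr⟩
    · rw [List.replicate_zero, List.append_nil] at hattr ⊢
      exact .inl ⟨rfl, hattr⟩
    · exact .inr ⟨j + 1, ⟨by omega, hj⟩, rfl, hattr⟩

theorem attrVal_iff {n : Node} (hn : IsElemNode τ n) {a : Att} {D : ℕ} :
    AttrVal τ n a D ↔
      ∃ m, ReflTransGen (AttrStep τ) n m ∧ τ.label m = some (.inr a) ∧ τ.dlabel m = some D := by
  simp only [reflTransGen_attrStep_iff]
  constructor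
  · rintro ⟨j, hj, ha, hD⟩
    exact ⟨_, ⟨j, hj.2, rfl⟩, ha, hD⟩
  · rintro ⟨_, ⟨_ | j, hj, rfl⟩, ha, hD⟩
    · rw [List.replicate_zero, List.append_nil] at ha
      exact (hn.not_isAttrNode ⟨a, ha⟩).elim
    · exact ⟨j + 1, ⟨by omega, hj⟩, ha, hD⟩

theorem attrReach_total {n m m' : Node} (hm : ReflTransGen (AttrStep τ) n m)
    (hm' : ReflTransGen (AttrStep τ) n m') :
    ReflTransGen (AttrStep τ) m m' ∨ ReflTransGen (AttrStep τ) m' m :=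
  ReflTransGen.total_of_right_unique
    (fun _ _ _ h h' => (attrStep_iff.1 h).1.trans (attrStep_iff.1 h').1.symm) hm hm'

theorem eq_of_reflTransGen_attrStep {n m : Node} (h : ReflTransGen (AttrStep τ) n m)
    (hm : IsElemNode τ m) : n = m := by
  obtain rfl | ⟨_, -, hstep⟩ := h.cases_tail
  · rfl
  · exact (hm.not_isAttrNode (attrStep_iff.1 hstep).2).elim

theorem docNext_iff (hτ : IsXMLTree τ) {n m y : Node} {d : Bool} (hn : IsElemNode τ n)
    (hm : ReflTransGen (AttrStep τ) n m) :
    DocNext τ d n y ↔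
      ∃ m', ReflTransGen (AttrStep τ) m m' ∧ y = m' ++ [d] ∧ IsElemNode τ y := by
  simp only [DocNext, seqLast_iff]
  constructor
  · rintro ⟨m', ⟨-, hm', hlast⟩, rfl, hy⟩
    refine ⟨m', ?_, rfl, hy⟩
    obtain h | h := attrReach_total hm hm'
    · exact h
    · obtain rfl | ⟨_, hstep, -⟩ := h.cases_head
      · exact .refl
      · obtain ⟨rfl, hattr⟩ := attrStep_iff.1 hstep
        exact (hlast hattr).elim
  · rintro ⟨m', hm', rfl, hy⟩
    refine ⟨m', ⟨hn, hm.trans hm', fun hattr => ?_⟩, rfl, hy⟩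
    cases d
    · exact hy.not_isAttrNode hattr
    · exact hτ.seq_right_leaf m' hattr hy.isSome

theorem DocNext.isElemNode {d : Bool} {n y : Node} (h : DocNext τ d n y) : IsElemNode τ y :=
  have ⟨_, _, _, hy⟩ := h
  hy

theorem DocNext.reflTransGen_step {B : Set Bool} {d : Bool} (hd : d ∈ B) {n y : Node}
    (h : DocNext τ d n y) : ReflTransGen (τ.Step (walk B)) n y := by
  obtain ⟨m, hm, rfl, hy⟩ := h
  exact ((seqLast_iff.1 hm).2.1.lift id fun _ _ => AttrStep.step_walk).tail
    (step_walk_iff.2 (.inr ⟨d, hd, rfl, hy⟩))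

theorem exists_docNext_attrReach (hτ : IsXMLTree τ) {B : Set Bool} {n x : Node}
    (hn : IsElemNode τ n) (h : ReflTransGen (τ.Step (walk B)) n x) :
    ∃ m, ReflTransGen (fun y z => ∃ d ∈ B, DocNext τ d y z) n m ∧ IsElemNode τ m ∧
      ReflTransGen (AttrStep τ) m x := by
  induction h with
  | refl => exact ⟨n, .refl, hn, .refl⟩
  | tail _ hstep ih =>
    obtain ⟨m, hnm, hm, hmx⟩ := ih
    obtain hattr | ⟨d, hd, rfl, hy⟩ := step_walk_iff.1 hstep
    · exact ⟨m, hnm, hm, hmx.tail (attrStep_iff.2 hattr)⟩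
    · exact ⟨_, hnm.tail ⟨d, hd, (docNext_iff hτ hm hmx).2 ⟨_, .refl, rfl, hy⟩⟩, hy, .refl⟩

theorem reflTransGen_step_walk_iff (hτ : IsXMLTree τ) {B : Set Bool} {n y : Node}
    (hn : IsElemNode τ n) :
    ReflTransGen (τ.Step (walk B)) n y ∧ IsElemNode τ y ↔
      ReflTransGen (fun y z => ∃ d ∈ B, DocNext τ d y z) n y := by
  constructor
  · rintro ⟨h, hy⟩
    obtain ⟨m, hnm, -, hmy⟩ := exists_docNext_attrReach hτ hn h
    rwa [← eq_of_reflTransGen_attrStep hmy hy]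
  · intro h
    refine ⟨h.lift' id fun _ _ ⟨_, hd, h⟩ => h.reflTransGen_step hd, ?_⟩
    obtain rfl | ⟨_, -, _, -, h⟩ := h.cases_tail
    · exact hn
    · exact h.isElemNode

theorem reflTransGen_comp_star_iff {α : Type*} {F N : α → α → Prop} {a b : α} :
    ReflTransGen (fun x y => ∃ z, F x z ∧ ReflTransGen N z y) a b ↔
      a = b ∨ ∃ c, F a c ∧ ReflTransGen (fun x y => F x y ∨ N x y) c b := by
  have hN {x y : α} (h : ReflTransGen N x y) : ReflTransGen (fun x y => F x y ∨ N x y) x y :=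
    h.lift id fun _ _ => .inr
  constructor
  · intro h
    induction h using ReflTransGen.head_induction_on with
    | refl => exact .inl rfl
    | head hstep _ ih =>
      obtain ⟨z, hF, hz⟩ := hstep
      refine .inr ⟨z, hF, ?_⟩
      obtain rfl | ⟨c, hc, hcb⟩ := ih
      · exact hN hz
      · exact (hN hz).trans (.head (.inl hc) hcb)
  · rintro (rfl | ⟨c, hac, hcb⟩)
    · exact .refl
    · suffices ∃ a', ReflTransGen (fun x y => ∃ z, F x z ∧ ReflTransGen N z y) a a' ∧
          ∃ z, F a' z ∧ ReflTransGen N z b from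
        have ⟨_, haa', hb⟩ := this
        haa'.tail hb
      induction hcb with
      | refl => exact ⟨a, .refl, c, hac, .refl⟩
      | tail _ hstep ih =>
        obtain ⟨a', haa', z, hz, hzb⟩ := ih
        obtain hF | hN := hstep
        · exact ⟨_, haa'.tail ⟨z, hz, hzb⟩, _, hF, .refl⟩
        · exact ⟨a', haa', z, hz, hzb.tail hN⟩

theorem reflTransGen_docChild_iff {n y : Node} :
    ReflTransGen (DocChild τ) n y ↔
      n = y ∨ ∃ c, DocNext τ false n c ∧
        ReflTransGen (fun x z => ∃ d ∈ Set.univ, DocNext τ d x z) c y := by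
  simp only [Set.mem_univ, true_and, Bool.exists_bool]
  exact reflTransGen_comp_star_iff

theorem exists_not_attrChain [Finite Att] (hτ : IsXMLTree τ) {n : Node} (hn : IsElemNode τ n) :
    ∃ j, ¬ AttrChain τ n (j + 1) := by
  by_contra! h
  choose a ha using fun j => (h j).2 (j + 1) (by omega) le_rfl
  refine not_injective_infinite_finite a fun i j hij => ?_
  by_contra hne
  exact hτ.attr_distinct n _ _ hn (h i) (h j) (by omega) (by rw [ha, ha, hij])

theorem exists_attrReach_of_nonleaf (hτ : IsXMLTree τ) {x : Node} (hx : τ.Nonleaf x) :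
    ∃ n, IsElemNode τ n ∧ ReflTransGen (AttrStep τ) n x := by
  induction x using List.reverseRecOn with
  | nil => exact ⟨[], hτ.root_elem, .refl⟩
  | append_singleton x d ih =>
    obtain ⟨e | a, hc⟩ := Option.isSome_iff_exists.1 hx
    · exact ⟨x ++ [d], ⟨e, hc⟩, .refl⟩
    · obtain ⟨n, hn, hnx⟩ := ih (τ.tree_cond x d hx)
      cases d
      · exact ⟨n, hn, hnx.tail (attrStep_iff.2 ⟨rfl, a, hc⟩)⟩
      · exact (hτ.attr_left x ⟨a, hc⟩).elim

theorem IsXMLTree.wellFounded_attrStep [Finite Att] (hτ : IsXMLTree τ) :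
    WellFounded (flip (AttrStep τ)) := by
  refine wellFounded_iff_isEmpty_descending_chain.2 ⟨fun ⟨f, hf⟩ => ?_⟩
  obtain ⟨n, hn, hnf⟩ := exists_attrReach_of_nonleaf hτ (hf 0).nonleaf
  have hchain (i : ℕ) : ReflTransGen (AttrStep τ) n (f (i + 1)) ∧ i ≤ (f (i + 1)).length := by
    induction i with
    | zero => exact ⟨hnf, Nat.zero_le _⟩
    | succ i ih =>
      have hlength := DataTree.Step.length_eq (hf (i + 1))
      exact ⟨ih.1.tail (hf (i + 1)), by omega⟩
  obtain ⟨j, hj⟩ := exists_not_attrChain hτ hn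
  obtain ⟨hreach, hlength⟩ := hchain (n.length + j + 1)
  obtain ⟨k, hk, heq⟩ := reflTransGen_attrStep_iff.1 hreach
  rw [heq, List.length_append, List.length_replicate] at hlength
  exact hj ⟨by omega, fun i hi hij => hk i hi (by omega)⟩

end Documents

/-! ## Translation of XPath -/

namespace FreezeFormula
variable {E Att : Type}

open Relation (ReflTransGen)

/-- The modality of the first child (`d = false`) or of the next sibling (`d = true`) of the
document node whose attribute sequence contains the current node. -/
def toNext (d : Bool) (φ : FreezeFormula (E ⊕ Att)) : FreezeFormula (E ⊕ Att) :=
  eventually (walk ∅) (next d (and (letter (Set.range .inl)) φ))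

/-- The modality of the document nodes reachable by first-child steps (if `false ∈ B`) and
next-sibling steps (if `true ∈ B`). -/
def toWalk (B : Set Bool) (φ : FreezeFormula (E ⊕ Att)) : FreezeFormula (E ⊕ Att) :=
  eventually (walk B) (and (letter (Set.range .inl)) φ)

/-- The modality of the `a`-labelled nodes in the rest of the current attribute sequence. -/
def atAttr (a : Att) (φ : FreezeFormula (E ⊕ Att)) : FreezeFormula (E ⊕ Att) :=
  eventually (walk ∅) (and (letter {.inr a}) φ)

/-- Equality or inequality of the datum of the node and the register. -/
def regCmp (eq : Bool) : FreezeFormula (E ⊕ Att) := if eq then regEq else neg regEq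

/-- The comparison of an `a`-attribute with a `b`-attribute of the same sequence that does not come
before it. -/
def attrCmp (a b : Att) (eq : Bool) : FreezeFormula (E ⊕ Att) :=
  atAttr a (freeze (atAttr b (regCmp eq)))

section Holds
variable {τ : DataTree (E ⊕ Att)} {φ : FreezeFormula (E ⊕ Att)} {v : ℕ}

theorem holds_letter_inl_iff {x : Node} :
    (letter (Set.range .inl) : FreezeFormula (E ⊕ Att)).Holds τ x v ↔ IsElemNode τ x :=
  Set.exists_range_iff

theorem holds_toNext_iff (hτ : IsXMLTree τ) {n m : Node} {d : Bool} (hn : IsElemNode τ n)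
    (hm : ReflTransGen (AttrStep τ) n m) :
    (toNext d φ).Holds τ m v ↔ ∃ y, DocNext τ d n y ∧ φ.Holds τ y v := by
  simp only [docNext_iff hτ hn hm]
  constructor
  · rintro ⟨m', hm', -, hy, hφ⟩
    exact ⟨_, ⟨m', hm', rfl, holds_letter_inl_iff.1 hy⟩, hφ⟩
  · rintro ⟨_, ⟨m', hm', rfl, hy⟩, hφ⟩
    exact ⟨m', hm', hy.isSome, holds_letter_inl_iff.2 hy, hφ⟩

theorem holds_toWalk_iff (hτ : IsXMLTree τ) {n : Node} {B : Set Bool} (hn : IsElemNode τ n) :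
    (toWalk B φ).Holds τ n v ↔
      ∃ y, ReflTransGen (fun x z => ∃ d ∈ B, DocNext τ d x z) n y ∧ φ.Holds τ y v := by
  simp only [← reflTransGen_step_walk_iff hτ hn, and_assoc]
  exact exists_congr fun y => and_congr_right fun _ => and_congr_left fun _ => holds_letter_inl_iff

theorem holds_toWalk_true_iff (hτ : IsXMLTree τ) {n : Node} (hn : IsElemNode τ n) :
    (toWalk {true} φ).Holds τ n v ↔ ∃ y, ReflTransGen (NextSib τ) n y ∧ φ.Holds τ y v := by
  simp only [holds_toWalk_iff hτ hn, Set.mem_singleton_iff, exists_eq_left]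
  rfl

theorem holds_toNext_toWalk_true_iff (hτ : IsXMLTree τ) {n m : Node} (hn : IsElemNode τ n)
    (hm : ReflTransGen (AttrStep τ) n m) :
    (toNext false (toWalk {true} φ)).Holds τ m v ↔ ∃ y, DocChild τ n y ∧ φ.Holds τ y v := by
  rw [holds_toNext_iff hτ hn hm]
  constructor
  · rintro ⟨c, hc, hφ⟩
    obtain ⟨y, hcy, hφ⟩ := (holds_toWalk_true_iff hτ hc.isElemNode).1 hφ
    exact ⟨y, ⟨c, hc, hcy⟩, hφ⟩
  · rintro ⟨y, ⟨c, hc, hcy⟩, hφ⟩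
    exact ⟨c, hc, (holds_toWalk_true_iff hτ (DocNext.isElemNode hc)).2 ⟨y, hcy, hφ⟩⟩

theorem holds_or_toNext_toWalk_univ_iff (hτ : IsXMLTree τ) {n : Node} (hn : IsElemNode τ n) :
    (φ.or (toNext false (toWalk Set.univ φ))).Holds τ n v ↔
      ∃ y, ReflTransGen (DocChild τ) n y ∧ φ.Holds τ y v := by
  rw [holds_or_iff, holds_toNext_iff hτ hn .refl]
  constructor
  · rintro (hφ | ⟨c, hc, hφ⟩)
    · exact ⟨n, .refl, hφ⟩
    · obtain ⟨y, hcy, hφ⟩ := (holds_toWalk_iff hτ hc.isElemNode).1 hφ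
      exact ⟨y, reflTransGen_docChild_iff.2 (.inr ⟨c, hc, hcy⟩), hφ⟩
  · rintro ⟨y, hy, hφ⟩
    obtain rfl | ⟨c, hc, hcy⟩ := reflTransGen_docChild_iff.1 hy
    · exact .inl hφ
    · exact .inr ⟨c, hc, (holds_toWalk_iff hτ hc.isElemNode).2 ⟨y, hcy, hφ⟩⟩

theorem holds_atAttr_iff {a : Att} {x : Node} :
    (atAttr a φ).Holds τ x v ↔
      ∃ m, ReflTransGen (AttrStep τ) x m ∧ τ.label m = some (.inr a) ∧ φ.Holds τ m v := by
  simp only [atAttr, Holds, Set.mem_singleton_iff, exists_eq_left]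

theorem holds_regCmp_iff {eq : Bool} {x : Node} {D : ℕ} (hD : τ.dlabel x = some D) :
    (regCmp eq : FreezeFormula (E ⊕ Att)).Holds τ x v ↔ (eq = true ↔ v = D) := by
  cases eq <;> simp [regCmp, Holds, hD, eq_comm]

theorem holds_atAttr_regCmp_iff {eq : Bool} {a : Att} {x : Node} :
    (atAttr a (regCmp eq) : FreezeFormula (E ⊕ Att)).Holds τ x v ↔
      ∃ m D, ReflTransGen (AttrStep τ) x m ∧ τ.label m = some (.inr a) ∧ τ.dlabel m = some D ∧
        (eq = true ↔ v = D) := by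
  rw [holds_atAttr_iff]
  constructor
  · rintro ⟨m, hm, ha, hcmp⟩
    obtain ⟨_, D, -, hD⟩ := (DataTree.nonleaf_of_label ha).exists_label_dlabel
    exact ⟨m, D, hm, ha, hD, (holds_regCmp_iff hD).1 hcmp⟩
  · rintro ⟨m, D, hm, ha, hD, hcmp⟩
    exact ⟨m, hm, ha, (holds_regCmp_iff hD).2 hcmp⟩

theorem holds_atAttr_freeze_iff {a : Att} {x : Node} :
    (atAttr a (freeze φ)).Holds τ x v ↔
      ∃ m D, ReflTransGen (AttrStep τ) x m ∧ τ.label m = some (.inr a) ∧ τ.dlabel m = some D ∧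
        φ.Holds τ m D := by
  simp only [holds_atAttr_iff, Holds, exists_and_left]

theorem holds_atAttr_freeze_iff_exists_attrVal {eq : Bool} {a b : Att} {n : Node}
    {S : Node → Prop} (hn : IsElemNode τ n) (hS : ∀ n₂, S n₂ → IsElemNode τ n₂)
    (hφ : ∀ m D, ReflTransGen (AttrStep τ) n m →
      (φ.Holds τ m D ↔ ∃ n₂, S n₂ ∧ (atAttr b (regCmp eq)).Holds τ n₂ D)) :
    (atAttr a (freeze φ)).Holds τ n v ↔
      ∃ D₁ D₂ n₂, AttrVal τ n a D₁ ∧ S n₂ ∧ AttrVal τ n₂ b D₂ ∧ (eq = true ↔ D₁ = D₂) := by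
  rw [holds_atAttr_freeze_iff]
  constructor
  · rintro ⟨m, D₁, hm, ha, hD₁, hφm⟩
    obtain ⟨n₂, hn₂, hcmp⟩ := (hφ m D₁ hm).1 hφm
    obtain ⟨m₂, D₂, hm₂, hb, hD₂, heq⟩ := holds_atAttr_regCmp_iff.1 hcmp
    exact ⟨D₁, D₂, n₂, (attrVal_iff hn).2 ⟨m, hm, ha, hD₁⟩, hn₂,
      (attrVal_iff (hS n₂ hn₂)).2 ⟨m₂, hm₂, hb, hD₂⟩, heq⟩
  · rintro ⟨D₁, D₂, n₂, hD₁, hn₂, hD₂, heq⟩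
    obtain ⟨m, hm, ha, hD₁⟩ := (attrVal_iff hn).1 hD₁
    obtain ⟨m₂, hm₂, hb, hD₂⟩ := (attrVal_iff (hS n₂ hn₂)).1 hD₂
    exact ⟨m, D₁, hm, ha, hD₁, (hφ m D₁ hm).2
      ⟨n₂, hn₂, holds_atAttr_regCmp_iff.2 ⟨m₂, D₂, hm₂, hb, hD₂, heq⟩⟩⟩

theorem holds_attrCmp_or_iff {eq : Bool} {a b : Att} {n : Node} (hn : IsElemNode τ n) :
    ((attrCmp a b eq).or (attrCmp b a eq)).Holds τ n v ↔
      ∃ D₁ D₂, AttrVal τ n a D₁ ∧ AttrVal τ n b D₂ ∧ (eq = true ↔ D₁ = D₂) := by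
  have hcmp (a b : Att) : (attrCmp a b eq).Holds τ n v ↔
      ∃ m₁ D₁, ReflTransGen (AttrStep τ) n m₁ ∧ τ.label m₁ = some (.inr a) ∧
        τ.dlabel m₁ = some D₁ ∧ ∃ m₂ D₂, ReflTransGen (AttrStep τ) m₁ m₂ ∧
          τ.label m₂ = some (.inr b) ∧ τ.dlabel m₂ = some D₂ ∧ (eq = true ↔ D₁ = D₂) := by
    simp only [attrCmp, holds_atAttr_freeze_iff, holds_atAttr_regCmp_iff]
  simp only [attrVal_iff hn, holds_or_iff, hcmp]
  constructor
  · rintro (⟨m₁, D₁, h₁, ha, hD₁, m₂, D₂, h₁₂, hb, hD₂, heq⟩ |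
      ⟨m₂, D₂, h₂, hb, hD₂, m₁, D₁, h₂₁, ha, hD₁, heq⟩)
    · exact ⟨D₁, D₂, ⟨m₁, h₁, ha, hD₁⟩, ⟨m₂, h₁.trans h₁₂, hb, hD₂⟩, heq⟩
    · exact ⟨D₁, D₂, ⟨m₁, h₂.trans h₂₁, ha, hD₁⟩, ⟨m₂, h₂, hb, hD₂⟩, heq.trans eq_comm⟩
  · rintro ⟨D₁, D₂, ⟨m₁, h₁, ha, hD₁⟩, ⟨m₂, h₂, hb, hD₂⟩, heq⟩
    obtain h₁₂ | h₂₁ := attrReach_total h₁ h₂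
    · exact .inl ⟨m₁, D₁, h₁, ha, hD₁, m₂, D₂, h₁₂, hb, hD₂, heq⟩
    · exact .inr ⟨m₂, D₂, h₂, hb, hD₂, m₁, D₁, h₂₁, ha, hD₁, heq.trans eq_comm⟩

end Holds

section WellFoundedOn
variable {τ : DataTree (E ⊕ Att)} {φ : FreezeFormula (E ⊕ Att)} {pol : Bool}

theorem wellFoundedOn_regCmp (eq : Bool) :
    (regCmp eq : FreezeFormula (E ⊕ Att)).WellFoundedOn τ pol := by
  cases eq <;> trivial

theorem WellFoundedOn.toWalk (h : φ.WellFoundedOn τ false) (B : Set Bool) :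
    (toWalk B φ).WellFoundedOn τ false :=
  ⟨nofun, trivial, h⟩

variable (hτ : WellFounded (flip (AttrStep τ)))
include hτ

theorem WellFoundedOn.toNext (h : φ.WellFoundedOn τ pol) (d : Bool) :
    (toNext d φ).WellFoundedOn τ pol :=
  ⟨fun _ => hτ, trivial, h⟩

theorem WellFoundedOn.atAttr (h : φ.WellFoundedOn τ pol) (a : Att) :
    (atAttr a φ).WellFoundedOn τ pol :=
  ⟨fun _ => hτ, trivial, h⟩

theorem wellFoundedOn_atAttr_regCmp (a : Att) (eq : Bool) :
    (atAttr a (regCmp eq) : FreezeFormula (E ⊕ Att)).WellFoundedOn τ pol :=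
  .atAttr hτ (wellFoundedOn_regCmp eq) a

theorem wellFoundedOn_attrCmp (a b : Att) (eq : Bool) :
    (attrCmp a b eq : FreezeFormula (E ⊕ Att)).WellFoundedOn τ pol :=
  .atAttr (φ := freeze _) hτ (wellFoundedOn_atAttr_regCmp hτ b eq) a

end WellFoundedOn

end FreezeFormula

section Translation
variable {E Att : Type}

open FreezeFormula

mutual

/-- The formula asserting that some node selected by the query satisfies the continuation `k`. -/
def XQuery.toFormula : XQuery E Att → FreezeFormula (E ⊕ Att) → FreezeFormula (E ⊕ Att)
  | .eps, k => k
  | .child, k => toNext false (toWalk {true} k)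
  | .nsib, k => toNext true k
  | .childStar, k => k.or (toNext false (toWalk Set.univ k))
  | .nsibStar, k => toWalk {true} k
  | .comp p q, k => p.toFormula (q.toFormula k)
  | .union p q, k => (p.toFormula k).or (q.toFormula k)
  | .filter p u, k => p.toFormula (u.toFormula.and k)

/-- The formula comparing an `a`-attribute of the node with a `b`-attribute of some node selected by
the query, where `eq` distinguishes `=` from `≠`. -/
def XStart.toFormula (a b : Att) (eq : Bool) : XStart E Att → FreezeFormula (E ⊕ Att)
  | .eps => (attrCmp a b eq).or (attrCmp b a eq)
  | .down p => atAttr a (freeze (toNext false (toWalk {true} (p.toFormula (atAttr b (regCmp eq))))))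
  | .right p => atAttr a (freeze (toNext true (p.toFormula (atAttr b (regCmp eq)))))

/-- The formula that is equivalent to a qualifier at document nodes. -/
def XQual.toFormula : XQual E Att → FreezeFormula (E ⊕ Att)
  | .not u => neg u.toFormula
  | .and u w => .and u.toFormula w.toFormula
  | .intro p => p.toFormula (letter Set.univ)
  | .lab e => letter {.inl e}
  | .eqq a s b => s.toFormula a b true
  | .neq a s b => s.toFormula a b false

end

theorem IsElemNode.of_docChild {τ : DataTree (E ⊕ Att)} {n n' : Node} (h : DocChild τ n n') :
    IsElemNode τ n' := by
  obtain ⟨c, hc, hcn'⟩ := h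
  obtain rfl | ⟨_, -, hlast⟩ := hcn'.cases_tail
  exacts [DocNext.isElemNode hc, DocNext.isElemNode hlast]

theorem IsElemNode.of_qSem {τ : DataTree (E ⊕ Att)} :
    ∀ {p : XQuery E Att} {n n' : Node}, IsElemNode τ n → QSem τ p n n' → IsElemNode τ n'
  | .eps, _, _, hn, h => (h : _ = _) ▸ hn
  | .child, _, _, _, h => .of_docChild h
  | .nsib, _, _, _, h => DocNext.isElemNode h
  | .childStar, _, _, hn, h =>
    h.cases_tail.elim (fun heq => heq ▸ hn) fun ⟨_, _, h⟩ => .of_docChild h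
  | .nsibStar, _, _, hn, h =>
    h.cases_tail.elim (fun heq => heq ▸ hn) fun ⟨_, _, h⟩ => DocNext.isElemNode h
  | .comp _ _, _, _, hn, ⟨_, h₁, h₂⟩ => .of_qSem (.of_qSem hn h₁) h₂
  | .union _ _, _, _, hn, h => h.elim (.of_qSem hn) (.of_qSem hn)
  | .filter _ _, _, _, hn, h => .of_qSem hn h.1

theorem exists_and_iff_exists_comp {α β : Type*} {R P : α → Prop} {T : α → β → Prop} {K : β → Prop}
    (h : ∀ y, R y → (P y ↔ ∃ z, T y z ∧ K z)) :
    (∃ y, R y ∧ P y) ↔ ∃ z, (∃ y, R y ∧ T y z) ∧ K z := by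
  rw [exists_congr fun y => and_congr_right (h y)]
  simp only [← exists_and_left, ← exists_and_right, and_assoc]
  exact exists_comm

section Correctness
variable {τ : DataTree (E ⊕ Att)}

mutual

theorem XQuery.holds_toFormula_iff (hτ : IsXMLTree τ) : ∀ (p : XQuery E Att)
    {k : FreezeFormula (E ⊕ Att)} {n : Node} {v : ℕ}, IsElemNode τ n →
    ((p.toFormula k).Holds τ n v ↔ ∃ n', QSem τ p n n' ∧ k.Holds τ n' v)
  | .eps, _, _, _, _ => by simp only [XQuery.toFormula, QSem, exists_eq_left']
  | .child, _, _, _, hn => holds_toNext_toWalk_true_iff hτ hn .refl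
  | .nsib, _, _, _, hn => holds_toNext_iff hτ hn .refl
  | .childStar, _, _, _, hn => holds_or_toNext_toWalk_univ_iff hτ hn
  | .nsibStar, _, _, _, hn => holds_toWalk_true_iff hτ hn
  | .comp p q, _, _, _, hn => (p.holds_toFormula_iff hτ hn).trans
      (exists_and_iff_exists_comp fun _ hm => q.holds_toFormula_iff hτ (hn.of_qSem hm))
  | .union p q, _, _, _, hn => by
    simp only [XQuery.toFormula, holds_or_iff, p.holds_toFormula_iff hτ hn,
      q.holds_toFormula_iff hτ hn, QSem, or_and_right, exists_or]
  | .filter p u, _, _, _, hn => by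
    simp only [XQuery.toFormula, p.holds_toFormula_iff hτ hn, QSem, and_assoc]
    exact exists_congr fun n' => and_congr_right fun h =>
      and_congr_left fun _ => u.holds_toFormula_iff hτ (hn.of_qSem h)

theorem XStart.holds_toFormula_iff (hτ : IsXMLTree τ) : ∀ (s : XStart E Att) {a b : Att}
    {eq : Bool} {n : Node} {v : ℕ}, IsElemNode τ n →
    ((s.toFormula a b eq).Holds τ n v ↔ ∃ D₁ D₂ n₂, AttrVal τ n a D₁ ∧ SSem τ s n n₂ ∧
      AttrVal τ n₂ b D₂ ∧ (eq = true ↔ D₁ = D₂))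
  | .eps, _, _, _, _, _, hn => by
    simp only [XStart.toFormula, holds_attrCmp_or_iff hn, SSem, exists_and_left, exists_eq_left']
  | .down p, _, _, _, _, _, hn =>
    holds_atAttr_freeze_iff_exists_attrVal hn
      (fun _ ⟨_, hy, hp⟩ => (IsElemNode.of_docChild hy).of_qSem hp)
      fun _ _ hm => (holds_toNext_toWalk_true_iff hτ hn hm).trans <|
        exists_and_iff_exists_comp fun _ hy => p.holds_toFormula_iff hτ (.of_docChild hy)
  | .right p, _, _, _, _, _, hn =>
    holds_atAttr_freeze_iff_exists_attrVal hn
      (fun _ ⟨_, hy, hp⟩ => (DocNext.isElemNode hy).of_qSem hp)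
      fun _ _ hm => (holds_toNext_iff hτ hn hm).trans <|
        exists_and_iff_exists_comp fun _ hy => p.holds_toFormula_iff hτ (DocNext.isElemNode hy)

theorem XQual.holds_toFormula_iff (hτ : IsXMLTree τ) : ∀ (u : XQual E Att) {n : Node} {v : ℕ},
    IsElemNode τ n → (u.toFormula.Holds τ n v ↔ USem τ u n)
  | .not u, _, _, hn => not_congr (u.holds_toFormula_iff hτ hn)
  | .and u w, _, _, hn => and_congr (u.holds_toFormula_iff hτ hn) (w.holds_toFormula_iff hτ hn)
  | .intro p, _, _, hn => by
    rw [XQual.toFormula, p.holds_toFormula_iff hτ hn]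
    exact exists_congr fun n' => and_iff_left_of_imp fun hp =>
      have ⟨e, he⟩ := hn.of_qSem hp
      ⟨.inl e, trivial, he⟩
  | .lab e, _, _, _ => by
    simp only [XQual.toFormula, Holds, USem, Set.mem_singleton_iff, exists_eq_left]
  | .eqq a s b, _, _, hn => by
    simp only [XQual.toFormula, s.holds_toFormula_iff hτ hn, USem, true_iff]
  | .neq a s b, _, _, hn => by
    simp only [XQual.toFormula, s.holds_toFormula_iff hτ hn, USem, Bool.false_eq_true, false_iff]

end

end Correctness

section Safety
variable {τ : DataTree (E ⊕ Att)}

mutual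

theorem XQuery.wellFoundedOn_toFormula (hτ : WellFounded (flip (AttrStep τ))) :
    ∀ (p : XQuery E Att) {k : FreezeFormula (E ⊕ Att)} {pol : Bool}, QSafe pol p →
      k.WellFoundedOn τ pol → (p.toFormula k).WellFoundedOn τ pol
  | .eps, _, _, _, hk => hk
  | .child, _, _, rfl, hk => (hk.toWalk _).toNext hτ _
  | .nsib, _, _, _, hk => hk.toNext hτ _
  | .childStar, _, _, rfl, hk => wellFoundedOn_or_iff.2 ⟨hk, (hk.toWalk _).toNext hτ _⟩
  | .nsibStar, _, _, rfl, hk => hk.toWalk _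
  | .comp p q, _, _, hp, hk =>
    p.wellFoundedOn_toFormula hτ hp.1 (q.wellFoundedOn_toFormula hτ hp.2 hk)
  | .union p q, _, _, hp, hk => wellFoundedOn_or_iff.2
      ⟨p.wellFoundedOn_toFormula hτ hp.1 hk, q.wellFoundedOn_toFormula hτ hp.2 hk⟩
  | .filter p u, _, _, hp, hk =>
    p.wellFoundedOn_toFormula hτ hp.1 ⟨u.wellFoundedOn_toFormula hτ hp.2, hk⟩

theorem XStart.wellFoundedOn_toFormula (hτ : WellFounded (flip (AttrStep τ))) :
    ∀ (s : XStart E Att) {a b : Att} {eq pol : Bool}, SSafe pol s →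
      (s.toFormula a b eq).WellFoundedOn τ pol
  | .eps, a, b, eq, _, _ =>
    wellFoundedOn_or_iff.2 ⟨wellFoundedOn_attrCmp hτ a b eq, wellFoundedOn_attrCmp hτ b a eq⟩
  | .down p, a, b, eq, _, ⟨rfl, hp⟩ =>
    have hcmp := wellFoundedOn_atAttr_regCmp hτ b eq
    .atAttr (φ := freeze _) hτ (((p.wellFoundedOn_toFormula hτ hp hcmp).toWalk _).toNext hτ _) a
  | .right p, a, b, eq, _, hp =>
    have hcmp := wellFoundedOn_atAttr_regCmp hτ b eq
    .atAttr (φ := freeze _) hτ ((p.wellFoundedOn_toFormula hτ hp hcmp).toNext hτ _) a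

theorem XQual.wellFoundedOn_toFormula (hτ : WellFounded (flip (AttrStep τ))) :
    ∀ (u : XQual E Att) {pol : Bool}, USafe pol u → u.toFormula.WellFoundedOn τ pol
  | .not u, _, hu => u.wellFoundedOn_toFormula hτ hu
  | .and u w, _, hu => ⟨u.wellFoundedOn_toFormula hτ hu.1, w.wellFoundedOn_toFormula hτ hu.2⟩
  | .intro p, _, hp => p.wellFoundedOn_toFormula hτ hp trivial
  | .lab _, _, _ => trivial
  | .eqq _ s _, _, hs => s.wellFoundedOn_toFormula hτ hs
  | .neq _ s _, _, hs => s.wellFoundedOn_toFormula hτ hs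

end

end Safety

theorem uSem_iff_subtree_mem_Lsaf {τ : DataTree (E ⊕ Att)} (hτ : IsXMLTree τ) {u : XQual E Att}
    (hu : u.toFormula.WellFoundedOn τ true) {n : Node} (hn : IsElemNode τ n) :
    USem τ u n ↔ τ.subtree n hn.isSome ∈ u.toFormula.automaton.Lsaf := by
  have hholds (D : ℕ) : u.toFormula.Holds (τ.subtree n hn.isSome) [] D ↔ USem τ u n := by
    rw [holds_subtree_iff, List.append_nil, u.holds_toFormula_iff hτ hn]
  obtain ⟨_, D, -, hD⟩ := DataTree.Nonleaf.exists_label_dlabel (τ.subtree n hn.isSome).root_nonleaf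
  simp only [mem_Lsaf_automaton_iff hu.subtree, hholds, hD, Option.some.injEq, exists_eq_left']

end Translation

theorem xpath_to_atra_general (E Att : Type) (u : XQual E Att) :
    ∃ M : ATRA (E ⊕ Att),
      (∀ τ : DataTree (E ⊕ Att), IsXMLTree τ → τ.Finite →
        ∀ n : Node, ∀ h : IsElemNode τ n,
          (USem τ u n ↔ τ.subtree n h.isSome ∈ M.Lfin)) ∧
      (USafe true u →
        ∀ τ : DataTree (E ⊕ Att), IsXMLTree τ → WellFounded (flip (AttrStep τ)) →
          ∀ n : Node, ∀ h : IsElemNode τ n,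
            (USem τ u n ↔ τ.subtree n h.isSome ∈ M.Lsaf)) := by
  refine ⟨u.toFormula.automaton, fun τ hτ hfin n hn => ?_, fun hsafe τ hτ hwf n hn => ?_⟩
  · have hu : u.toFormula.WellFoundedOn τ true :=
      FreezeFormula.wellFoundedOn_of_wellFounded_step hfin.wellFounded_step _ _
    exact (uSem_iff_subtree_mem_Lsaf hτ hu hn).trans (and_iff_right hfin.subtree).symm
  · exact uSem_iff_subtree_mem_Lsaf hτ (u.wellFoundedOn_toFormula hwf hsafe) hn

/-- Every forward XPath qualifier `u` over element types `E`
and attribute names `Att` has a finitely equivalent ATRA₁ over `E ⊕ Att`, which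
may moreover be chosen safety equivalent to `u` whenever `u` is safety. -/
theorem xpath_to_atra (E Att : Type) [Fintype E] [Fintype Att] (u : XQual E Att) :
    ∃ M : ATRA (E ⊕ Att),
      (∀ τ : DataTree (E ⊕ Att), IsXMLTree τ → τ.Finite →
        ∀ n : Node, ∀ h : IsElemNode τ n,
          (USem τ u n ↔ τ.subtree n h.isSome ∈ M.Lfin)) ∧
      (USafe true u →
        ∀ τ : DataTree (E ⊕ Att), IsXMLTree τ →
          ∀ n : Node, ∀ h : IsElemNode τ n,
            (USem τ u n ↔ τ.subtree n h.isSome ∈ M.Lsaf)) := by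
  obtain ⟨M, hfin, hsafe⟩ := xpath_to_atra_general E Att u
  exact ⟨M, hfin, fun hu τ hτ => hsafe hu τ hτ hτ.wellFounded_attrStep⟩
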